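/- Let m ≥ 1 be an integer, let d ∈ ℤ, and let w ∈ ℤ^m be a column vector. Set γ = gcd(d, g) where g is the greatest common divisor of the entries of w. Then the quotient abelian group ℤ^m / (dℤ^m + ℤw) is isomorphic to (ℤ/γℤ) ⊕ (ℤ/dℤ)^{m−1}. -/

import Mathlib

/-!
Over a principal ideal domain, Smith normal form of the cyclic submodule spanned by `w` makes `w` a
multiple `c • b 0` of a member of some basis `b`. In that basis the submodule `d M + R w` is the
product of the ideals `(d, c), (d), …, (d)`, so the quotient splits coordinatewise. Finally, the
ideal generated by the coordinates of `w` does not depend on the basis, so `(d, c)` is generated by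
`d` and the original coordinates of `w`.
-/

open Module

section Basis

variable {R M ι κ : Type*}

theorem exists_basis_eq_smul [CommRing R] [IsDomain R] [IsPrincipalIdealRing R] [AddCommGroup M]
    [Module R M] [Finite ι] (b : Basis ι R M) (i : ι) (w : M) :
    ∃ (b' : Basis ι R M) (c : R), w = c • b' i := by
  classical
  obtain ⟨k, snf⟩ := Submodule.smithNormalForm b (Submodule.span R {w})
  have k_le_one : k ≤ 1 := by
    simpa [finrank_eq_card_basis snf.bN] using finrank_span_le_card (R := R) ({w} : Set M)
  have sum_eq_w : ∑ l, snf.bN.repr ⟨w, Submodule.mem_span_singleton_self w⟩ l •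
      (snf.bN l : M) = w := by
    simpa only [Submodule.coe_sum, Submodule.coe_smul] using congrArg Subtype.val
      (snf.bN.sum_repr ⟨w, Submodule.mem_span_singleton_self w⟩)
  obtain ⟨j, c, hw⟩ : ∃ (j : ι) (c : R), w = c • snf.bM j := by
    obtain rfl | rfl := Nat.le_one_iff_eq_zero_or_eq_one.mp k_le_one
    · exact ⟨i, 0, by simpa using sum_eq_w.symm⟩
    · rw [Fin.sum_univ_one, snf.snf, smul_smul] at sum_eq_w
      exact ⟨snf.f 0, _, sum_eq_w.symm⟩
  exact ⟨snf.bM.reindex (Equiv.swap j i), c, by simp [hw]⟩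

variable [CommSemiring R] [AddCommMonoid M] [Module R M]

theorem apply_mem_span_range_repr (b : Basis ι R M) (f : M →ₗ[R] R) (w : M) :
    f w ∈ Ideal.span (Set.range (b.repr w)) := by
  have f_eq_sum : f w = (b.repr w).sum fun i a => a * f (b i) := by
    conv_lhs => rw [← b.linearCombination_repr w]
    simp only [Finsupp.linearCombination_apply, map_finsuppSum, map_smul, smul_eq_mul]
  rw [f_eq_sum]
  exact Submodule.sum_mem _ fun i _ => Ideal.mul_mem_right _ _ (Ideal.subset_span ⟨i, rfl⟩)

theorem span_range_repr_smul_basis (b : Basis ι R M) (b' : Basis κ R M) (c : R) (k : κ) :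
    Ideal.span (Set.range (b.repr (c • b' k))) = Ideal.span {c} := by
  apply le_antisymm
  · rw [Ideal.span_le]
    rintro _ ⟨i, rfl⟩
    simp [Ideal.mem_span_singleton]
  · rw [Ideal.span_singleton_le_iff_mem]
    simpa using apply_mem_span_range_repr b (b'.coord k) (c • b' k)

end Basis

section Quotient

variable {R M : Type*} [CommRing R] [AddCommGroup M] [Module R M] {n : ℕ}

theorem mem_span_range_smul_union_singleton {d : R} {w x : M} :
    x ∈ Submodule.span R ((Set.range fun y : M => d • y) ∪ {w}) ↔
      ∃ (y : M) (a : R), d • y + a • w = x := by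
  have span_range_smul : Submodule.span R (Set.range fun y : M => d • y) =
      LinearMap.range (LinearMap.lsmul R M d) :=
    Submodule.span_eq (LinearMap.range (LinearMap.lsmul R M d))
  simp only [Submodule.span_union, span_range_smul, Submodule.mem_sup, LinearMap.mem_range,
    LinearMap.lsmul_apply, Submodule.mem_span_singleton, exists_exists_eq_and]

theorem map_equivFun_span_range_smul_union (b : Basis (Fin (n + 1)) R M) (d c : R) :
    (Submodule.span R ((Set.range fun y : M => d • y) ∪ {c • b 0})).map
        (b.equivFun : M →ₗ[R] Fin (n + 1) → R) =
      Submodule.pi Set.univ (Fin.cons (Ideal.span {d, c}) fun _ => Ideal.span {d}) := by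
  ext x
  rw [Submodule.mem_map_equiv, mem_span_range_smul_union_singleton]
  simp only [Submodule.mem_pi, Set.mem_univ, true_imp_iff, Fin.forall_fin_succ, Fin.cons_zero,
    Fin.cons_succ, Ideal.mem_span_pair, Ideal.mem_span_singleton]
  constructor
  · rintro ⟨y, a, hx⟩
    obtain rfl : b.equivFun (d • y + a • c • b 0) = x := b.equivFun.eq_symm_apply.mp hx
    exact ⟨⟨b.repr y 0, a, by simp [mul_comm d]⟩, fun i => by simp⟩
  · rintro ⟨⟨s, a, head_eq⟩, d_dvd_tail⟩
    choose t tail_eq using d_dvd_tail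
    refine ⟨b.equivFun.symm (Fin.cons s t), a, ?_⟩
    rw [LinearEquiv.eq_symm_apply, map_add, map_smul, LinearEquiv.apply_symm_apply]
    ext i
    cases i using Fin.cases with
    | zero => simp [← head_eq, mul_comm d]
    | succ i => simp [tail_eq]

/-- The splitting of `M / (d M + R w)` into cyclic modules, when `w` is the multiple `c • b 0` of a
member of a basis `b`. The first factor belongs to the coordinate along `b 0`, the others to the
remaining coordinates in order. -/
noncomputable def quotientSpanSmulBasisEquiv (b : Basis (Fin (n + 1)) R M) (d c : R) :
    (M ⧸ Submodule.span R ((Set.range fun y : M => d • y) ∪ {c • b 0})) ≃ₗ[R]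
      (R ⧸ Ideal.span {d, c}) × (Fin n → R ⧸ Ideal.span {d}) :=
  let I : Fin (n + 1) → Ideal R := Fin.cons (Ideal.span {d, c}) fun _ => Ideal.span {d}
  (Submodule.Quotient.equiv _ _ b.equivFun (map_equivFun_span_range_smul_union b d c)).trans <|
    (Submodule.quotientPi I).trans (Fin.consLinearEquiv R fun i => R ⧸ I i).symm

theorem stmt0_general [IsDomain R] [IsPrincipalIdealRing R] (b : Basis (Fin (n + 1)) R M) (d : R)
    (w : M) :
    Nonempty ((M ⧸ Submodule.span R ((Set.range fun y : M => d • y) ∪ {w})) ≃ₗ[R]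
      (R ⧸ Ideal.span (insert d (Set.range (b.repr w)))) × (Fin n → R ⧸ Ideal.span {d})) := by
  obtain ⟨b', c, rfl⟩ := exists_basis_eq_smul b 0 w
  rw [Ideal.span_insert, span_range_repr_smul_basis b b', ← Ideal.span_insert]
  exact ⟨quotientSpanSmulBasisEquiv b' d c⟩

end Quotient

section GCD

variable {R ι : Type*} [CommRing R] [IsBezout R] [NormalizedGCDMonoid R]

theorem span_singleton_finset_gcd (s : Finset ι) (f : ι → R) :
    Ideal.span {s.gcd f} = Ideal.span (f '' s) := by
  apply le_antisymm
  · obtain ⟨g, gcd_eq_sum⟩ := s.gcd_eq_sum_mul f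
    rw [Ideal.span_singleton_le_iff_mem, gcd_eq_sum]
    exact Submodule.sum_mem _ fun i hi =>
      Ideal.mul_mem_right _ _ (Ideal.subset_span (Set.mem_image_of_mem f hi))
  · rw [Ideal.span_le]
    rintro _ ⟨i, hi, rfl⟩
    exact Ideal.mem_span_singleton.mpr (Finset.gcd_dvd hi)

theorem span_insert_range_eq_span_gcd [IsDomain R] [Fintype ι] (d : R) (f : ι → R) :
    Ideal.span (insert d (Set.range f)) = Ideal.span {gcd d (Finset.univ.gcd f)} := by
  rw [span_gcd, Ideal.span_insert, Ideal.span_insert, span_singleton_finset_gcd, Finset.coe_univ,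
    Set.image_univ]

end GCD

/-- Let `m ≥ 1`, `d ∈ ℤ`, and `w ∈ ℤ^m`. With
`γ = gcd(d, gcd(w))`, the quotient `ℤ^m / (dℤ^m + ℤw)` is isomorphic to
`(ℤ/γℤ) ⊕ (ℤ/dℤ)^{m-1}`. -/
theorem stmt0 (m : ℕ) (hm : 1 ≤ m) (d : ℤ) (w : Fin m → ℤ)
    (γ : ℕ) (hγ : (γ : ℤ) = Int.gcd d (Finset.univ.gcd w)) :
    Nonempty
      (((Fin m → ℤ) ⧸
          Submodule.span ℤ ((Set.range fun y : Fin m → ℤ => d • y) ∪ {w})) ≃+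
        (ZMod γ × (Fin (m - 1) → ZMod d.natAbs))) := by
  obtain ⟨n, rfl⟩ := Nat.exists_eq_add_of_le' hm
  have span_eq : Ideal.span (insert d (Set.range w)) = Ideal.span {(γ : ℤ)} := by
    rw [hγ, Int.coe_gcd, span_insert_range_eq_span_gcd]
  exact (stmt0_general (Pi.basisFun ℤ (Fin (n + 1))) d w).map fun e =>
    e.toAddEquiv.trans <| .prodCongr
      ((Ideal.quotEquivOfEq span_eq).trans (Int.quotientSpanNatEquivZMod γ)).toAddEquiv
      (.piCongrRight fun _ => (Int.quotientSpanEquivZMod d).toAddEquiv)
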